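/- Let f : [0,∞) → ℝ be differentiable with f' Lebesgue integrable on [a,b], where 0 < a < b < ∞. Let (α,m) ∈ (0,1]², q > 1, and 0 < p < q. If |f'|^q is (α,m)-GA-convex on [0, max{a^{1/m}, b}], then |(b²·f(b) − a²·f(a))/2 − ∫_a^b x·f(x) dx| ≤ ((ln b − ln a)/2) · [L(a^{3(q−p)/(q−1)}, b^{3(q−p)/(q−1)})]^{1−1/q} · { m·[L(a^{3p}, b^{3p}) − G(α,3p)]·|f'(a^{1/m})|^q + G(α,3p)·|f'(b)|^q }^{1/q}. -/

import Mathlib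

open Real MeasureTheory Set

/-- The logarithmic mean `L(x,y) = (y - x)/(ln y - ln x)`. -/
noncomputable def L (x y : ℝ) : ℝ := (y - x) / (Real.log y - Real.log x)

/-- `G(α,ℓ) = ∫_0^1 t^α a^{ℓ(1-t)} b^{ℓ t} dt` (for parameters `a, b`). -/
noncomputable def G (a b α ℓ : ℝ) : ℝ :=
  ∫ t in (0:ℝ)..1, t ^ α * a ^ (ℓ * (1 - t)) * b ^ (ℓ * t)

/-- A function `h` is `(α,m)`-GA-convex on `[0,c]` if
`h(x^λ y^{m(1-λ)}) ≤ λ^α h(x) + m(1-λ^α) h(y)` for all `x, y ∈ [0,c]`, `λ ∈ [0,1]`. -/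
def GAConvexOn (α m c : ℝ) (h : ℝ → ℝ) : Prop :=
  ∀ x ∈ Icc (0:ℝ) c, ∀ y ∈ Icc (0:ℝ) c, ∀ l ∈ Icc (0:ℝ) 1,
    h (x ^ l * y ^ (m * (1 - l))) ≤ l ^ α * h x + m * (1 - l ^ α) * h y

/-- A function `h` is `(α,m)`-GA-concave on `[0,c]` if
`h(x^λ y^{m(1-λ)}) ≥ λ^α h(x) + m(1-λ^α) h(y)` for all `x, y ∈ [0,c]`, `λ ∈ [0,1]`. -/
def GAConcaveOn (α m c : ℝ) (h : ℝ → ℝ) : Prop :=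
  ∀ x ∈ Icc (0:ℝ) c, ∀ y ∈ Icc (0:ℝ) c, ∀ l ∈ Icc (0:ℝ) 1,
    l ^ α * h x + m * (1 - l ^ α) * h y ≤ h (x ^ l * y ^ (m * (1 - l)))

/-!
Along the geometric path `g t = a^(1-t) b^t`, which satisfies `g' = (log b - log a) g`, integration
by parts turns the left-hand side into `(log b - log a)/2 * ∫₀¹ g³ f'(g)`. Hölder's inequality for
the splitting `g³ |f'(g)| = g^(3(q-p)/q) · g^(3p/q) |f'(g)|` separates a power of a logarithmic mean
from `∫₀¹ g^(3p) |f'(g)|^q`. Since `g t = b^t (a^(1/m))^(m(1-t))`, GA-convexity bounds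
`|f'(g t)|^q` by an affine function of `t^α`, and integrating it against `g^(3p)` produces `L`
and `G`. The same bound, with the measurability of derivatives, makes `f' ∘ g` integrable.
-/

lemma L_nonneg {x y : ℝ} (hx : 0 < x) (hy : 0 < y) : 0 ≤ L x y := by
  rcases le_total x y with hxy | hyx
  · exact div_nonneg (sub_nonneg.2 hxy) (sub_nonneg.2 (log_le_log hx hxy))
  · exact div_nonneg_of_nonpos (sub_nonpos.2 hyx) (sub_nonpos.2 (log_le_log hy hyx))

lemma aestronglyMeasurable_comp_of_hasDerivAt {X E : Type*} [MeasurableSpace X] {μ : Measure X}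
    [NormedAddCommGroup E] [NormedSpace ℝ E] [CompleteSpace E] {f f' : ℝ → E} {g : X → ℝ}
    (hg : Measurable g) (hderiv : ∀ᵐ x ∂μ, HasDerivAt f (f' (g x)) (g x)) :
    AEStronglyMeasurable (fun x => f' (g x)) μ :=
  ((stronglyMeasurable_deriv f).comp_measurable hg).aestronglyMeasurable.congr
    (hderiv.mono fun _ hx => hx.deriv)

lemma integrable_of_integrable_norm_rpow {X E : Type*} [MeasurableSpace X] {μ : Measure X}
    [IsFiniteMeasure μ] [NormedAddCommGroup E] {f : X → E} {q : ℝ} (hq : 1 ≤ q)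
    (hf : AEStronglyMeasurable f μ) (hint : Integrable (fun x => ‖f x‖ ^ q) μ) :
    Integrable f μ := by
  have hmem : MemLp f (ENNReal.ofReal q) μ := by
    rwa [← integrable_norm_rpow_iff hf (by simpa using one_pos.trans_le hq) ENNReal.ofReal_ne_top,
      ENNReal.toReal_ofReal (zero_le_one.trans hq)]
  exact hmem.integrable (ENNReal.one_le_ofReal.2 hq)

lemma integral_mul_norm_le_rpow_mul_rpow {X E : Type*} [MeasurableSpace X] {μ : Measure X}
    [NormedAddCommGroup E] {w : X → ℝ} {h : X → E} {p q : ℝ} (hq : 1 < q) (hw : ∀ x, 0 < w x)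
    (hwm : AEStronglyMeasurable w μ) (hhm : AEStronglyMeasurable h μ)
    (hwint : Integrable (fun x => w x ^ ((q - p) / (q - 1))) μ)
    (hhint : Integrable (fun x => w x ^ p * ‖h x‖ ^ q) μ) :
    ∫ x, w x * ‖h x‖ ∂μ ≤ (∫ x, w x ^ ((q - p) / (q - 1)) ∂μ) ^ (1 - 1 / q) *
      (∫ x, w x ^ p * ‖h x‖ ^ q ∂μ) ^ (1 / q) := by
  have hq0 : 0 < q := one_pos.trans hq
  have hq1 : 0 < q - 1 := sub_pos.2 hq
  have hconj : (q / (q - 1)).HolderConjugate q := (HolderConjugate.conjExponent hq).symm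
  have pow_left (x : X) : ‖w x ^ ((q - p) / q)‖ ^ (q / (q - 1)) = w x ^ ((q - p) / (q - 1)) := by
    rw [norm_of_nonneg (rpow_nonneg (hw x).le _), ← rpow_mul (hw x).le]
    congr 1; field_simp
  have pow_right (x : X) : ‖w x ^ (p / q) * ‖h x‖‖ ^ q = w x ^ p * ‖h x‖ ^ q := by
    have hwx := rpow_nonneg (hw x).le (p / q)
    rw [norm_of_nonneg (by positivity), mul_rpow hwx (norm_nonneg _), ← rpow_mul (hw x).le,
      div_mul_cancel₀ p hq0.ne']
  have split (x : X) : ‖w x ^ ((q - p) / q)‖ * ‖w x ^ (p / q) * ‖h x‖‖ = w x * ‖h x‖ := by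
    rw [norm_of_nonneg (rpow_nonneg (hw x).le _),
      norm_of_nonneg (mul_nonneg (rpow_nonneg (hw x).le _) (norm_nonneg _)), ← mul_assoc,
      ← rpow_add (hw x), ← add_div, sub_add_cancel, div_self hq0.ne', rpow_one]
  have memLp_left : MemLp (fun x => w x ^ ((q - p) / q)) (ENNReal.ofReal (q / (q - 1))) μ := by
    rw [← integrable_norm_rpow_iff (hwm.aemeasurable.pow_const _).aestronglyMeasurable
      (by simpa using hconj.pos) ENNReal.ofReal_ne_top, ENNReal.toReal_ofReal hconj.nonneg]
    simpa only [pow_left] using hwint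
  have memLp_right : MemLp (fun x => w x ^ (p / q) * ‖h x‖) (ENNReal.ofReal q) μ := by
    rw [← integrable_norm_rpow_iff
      ((hwm.aemeasurable.pow_const _).aestronglyMeasurable.fun_mul hhm.norm)
      (by simpa using hq0) ENNReal.ofReal_ne_top, ENNReal.toReal_ofReal hq0.le]
    simpa only [pow_right] using hhint
  have holder := integral_mul_norm_le_Lp_mul_Lq hconj memLp_left memLp_right
  simp only [split, pow_left, pow_right] at holder
  rwa [one_div_div, sub_div q 1 q, div_self hq0.ne'] at holder

/-- The geometric path `t ↦ a^(1-t) b^t` from `a` to `b`, along which all integrals over `[a, b]`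
are pulled back to `[0, 1]`. It is meant for nonnegative endpoints. -/
noncomputable def geomPath (a b t : ℝ) : ℝ := a ^ (1 - t) * b ^ t

section geomPath

variable {a b : ℝ}

@[simp]
lemma geomPath_zero (a b : ℝ) : geomPath a b 0 = a := by simp [geomPath]

@[simp]
lemma geomPath_one (a b : ℝ) : geomPath a b 1 = b := by simp [geomPath]

lemma geomPath_pos (ha : 0 < a) (hb : 0 < b) (t : ℝ) : 0 < geomPath a b t := by
  unfold geomPath; positivity

lemma geomPath_rpow (ha : 0 ≤ a) (hb : 0 ≤ b) (s t : ℝ) :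
    geomPath a b t ^ s = geomPath (a ^ s) (b ^ s) t := by
  rw [geomPath, geomPath, mul_rpow (by positivity) (by positivity), ← rpow_mul ha, ← rpow_mul hb,
    ← rpow_mul ha, ← rpow_mul hb, mul_comm s, mul_comm s]

lemma geomPath_mem_Icc (ha : 0 < a) (hab : a ≤ b) {t : ℝ} (ht : t ∈ Icc (0 : ℝ) 1) :
    geomPath a b t ∈ Icc a b := by
  have hb : 0 < b := ha.trans_le hab
  have split {c : ℝ} (hc : 0 < c) : c ^ (1 - t) * c ^ t = c := by
    rw [← rpow_add hc, sub_add_cancel, rpow_one]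
  constructor
  · calc
      a = a ^ (1 - t) * a ^ t := (split ha).symm
      _ ≤ geomPath a b t :=
        mul_le_mul_of_nonneg_left (rpow_le_rpow ha.le hab ht.1) (by positivity)
  · calc
      geomPath a b t ≤ b ^ (1 - t) * b ^ t :=
        mul_le_mul_of_nonneg_right (rpow_le_rpow ha.le hab (sub_nonneg.2 ht.2)) (by positivity)
      _ = b := split hb

lemma hasDerivAt_geomPath (ha : 0 < a) (hb : 0 < b) (t : ℝ) :
    HasDerivAt (geomPath a b) ((log b - log a) * geomPath a b t) t := by
  have h := (((hasDerivAt_id t).const_sub 1).const_rpow ha).mul ((hasDerivAt_id t).const_rpow hb)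
  refine h.congr_deriv ?_
  simp only [geomPath, id]
  ring

lemma continuous_geomPath (ha : 0 < a) (hb : 0 < b) : Continuous (geomPath a b) :=
  continuous_iff_continuousAt.2 fun t => (hasDerivAt_geomPath ha hb t).continuousAt

lemma continuous_geomPath_rpow (ha : 0 < a) (hb : 0 < b) (s : ℝ) :
    Continuous fun t => geomPath a b t ^ s :=
  (continuous_geomPath ha hb).rpow_const fun t => Or.inl (geomPath_pos ha hb t).ne'

lemma integral_geomPath (ha : 0 < a) (hb : 0 < b) (hab : a ≠ b) :
    ∫ t in (0 : ℝ)..1, geomPath a b t = L a b := by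
  have hlog : log b - log a ≠ 0 := sub_ne_zero.2 fun h => hab (log_injOn_pos hb ha h).symm
  have ftc : ∫ t in (0 : ℝ)..1, (log b - log a) * geomPath a b t = b - a := by
    have hcont := continuous_geomPath ha hb
    simpa only [geomPath_zero, geomPath_one] using
      intervalIntegral.integral_eq_sub_of_hasDerivAt (fun t _ => hasDerivAt_geomPath ha hb t)
        ((hcont.const_mul _).intervalIntegrable 0 1)
  rw [L, eq_div_iff hlog, ← ftc, intervalIntegral.integral_const_mul, mul_comm]

lemma integral_geomPath_rpow (ha : 0 < a) (hb : 0 < b) (hab : a ≠ b) {s : ℝ} (hs : s ≠ 0) :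
    ∫ t in (0 : ℝ)..1, geomPath a b t ^ s = L (a ^ s) (b ^ s) := by
  simp only [geomPath_rpow ha.le hb.le]
  exact integral_geomPath (rpow_pos_of_pos ha s) (rpow_pos_of_pos hb s)
    fun h => hab ((rpow_left_inj ha.le hb.le hs).1 h)

lemma integral_rpow_mul_geomPath_rpow (ha : 0 ≤ a) (hb : 0 ≤ b) (α s : ℝ) :
    ∫ t in (0 : ℝ)..1, t ^ α * geomPath a b t ^ s = G a b α s := by
  refine intervalIntegral.integral_congr fun t _ => ?_
  dsimp only [geomPath]
  rw [mul_rpow (by positivity) (by positivity), ← rpow_mul ha, ← rpow_mul hb,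
    mul_comm s, mul_comm s, mul_assoc]

lemma integral_eq_log_sub_log_mul_integral_geomPath (ha : 0 < a) (hab : a ≤ b) {φ : ℝ → ℝ}
    (hφ : ContinuousOn φ (Icc a b)) :
    ∫ x in a..b, φ x =
      (log b - log a) * ∫ t in (0 : ℝ)..1, geomPath a b t * φ (geomPath a b t) := by
  have hb : 0 < b := ha.trans_le hab
  have hcont := continuous_geomPath ha hb
  have hmaps : geomPath a b '' uIcc 0 1 ⊆ Icc a b := by
    rw [uIcc_of_le zero_le_one]
    exact image_subset_iff.2 fun t => geomPath_mem_Icc ha hab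
  have subst := intervalIntegral.integral_comp_mul_deriv'' hcont.continuousOn
    (fun t _ => (hasDerivAt_geomPath ha hb t).hasDerivWithinAt)
    (hcont.const_mul (log b - log a)).continuousOn (hφ.mono hmaps)
  rw [geomPath_zero, geomPath_one] at subst
  rw [← subst, ← intervalIntegral.integral_const_mul]
  refine intervalIntegral.integral_congr fun t _ => ?_
  simp only [Function.comp_apply]
  ring

lemma log_sub_log_mul_integral_geomPath_pow_mul_deriv (ha : 0 < a) (hab : a ≤ b) {f f' : ℝ → ℝ}
    (hderiv : ∀ x ∈ Icc a b, HasDerivAt f (f' x) x)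
    (hint : IntervalIntegrable (fun t => f' (geomPath a b t)) volume 0 1) (n : ℕ) :
    (log b - log a) * ∫ t in (0 : ℝ)..1, geomPath a b t ^ (n + 2) * f' (geomPath a b t) =
      b ^ (n + 1) * f b - a ^ (n + 1) * f a - (n + 1) * ∫ x in a..b, x ^ n * f x := by
  have hb : 0 < b := ha.trans_le hab
  have hcont := continuous_geomPath ha hb
  have hu (t : ℝ) : HasDerivAt (fun t => geomPath a b t ^ (n + 1))
      ((n + 1) * (log b - log a) * geomPath a b t ^ (n + 1)) t := by
    refine ((hasDerivAt_geomPath ha hb t).fun_pow (n + 1)).congr_deriv ?_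
    push_cast [Nat.add_sub_cancel]
    ring
  have hv : ∀ t ∈ uIcc (0 : ℝ) 1, HasDerivAt (fun t => f (geomPath a b t))
      (f' (geomPath a b t) * ((log b - log a) * geomPath a b t)) t := by
    rw [uIcc_of_le zero_le_one]
    exact fun t ht => (hderiv _ (geomPath_mem_Icc ha hab ht)).comp t (hasDerivAt_geomPath ha hb t)
  have parts := intervalIntegral.integral_mul_deriv_eq_deriv_mul (fun t _ => hu t) hv
    (((hcont.pow (n + 1)).const_mul _).intervalIntegrable 0 1)
    (hint.mul_continuousOn (hcont.const_mul _).continuousOn)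
  have hf : ContinuousOn (fun x => x ^ n * f x) (Icc a b) := (continuousOn_pow n).mul
    fun x hx => (hderiv x hx).continuousAt.continuousWithinAt
  simp only [geomPath_zero, geomPath_one] at parts
  rw [integral_eq_log_sub_log_mul_integral_geomPath ha hab hf, ← mul_assoc,
    ← intervalIntegral.integral_const_mul, ← intervalIntegral.integral_const_mul]
  convert parts using 2
  · ext t; ring
  · exact intervalIntegral.integral_congr fun t _ => by ring

end geomPath

lemma abs_integral_geomPath_rpow_mul_le {a b p q r : ℝ} {φ : ℝ → ℝ} (ha : 0 < a) (hb : 0 < b)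
    (hab : a ≠ b) (hq : 1 < q) (hpq : p ≠ q) (hr : r ≠ 0)
    (hφ : AEStronglyMeasurable φ (volume.restrict (Ioc 0 1)))
    (hint : IntervalIntegrable (fun t => |φ t| ^ q) volume 0 1) :
    |∫ t in (0 : ℝ)..1, geomPath a b t ^ r * φ t| ≤
      L (a ^ (r * (q - p) / (q - 1))) (b ^ (r * (q - p) / (q - 1))) ^ (1 - 1 / q) *
        (∫ t in (0 : ℝ)..1, geomPath a b t ^ (r * p) * |φ t| ^ q) ^ (1 / q) := by
  have hcont := continuous_geomPath_rpow ha hb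
  have hexp : r * (q - p) / (q - 1) ≠ 0 :=
    div_ne_zero (mul_ne_zero hr (sub_ne_zero.2 hpq.symm)) (sub_pos.2 hq).ne'
  have rpow_rpow (s t : ℝ) : (geomPath a b t ^ r) ^ s = geomPath a b t ^ (r * s) :=
    (rpow_mul (geomPath_pos ha hb t).le r s).symm
  have holder := integral_mul_norm_le_rpow_mul_rpow (p := p) hq
    (fun t => rpow_pos_of_pos (geomPath_pos ha hb t) r) (hcont r).aestronglyMeasurable hφ
    (by simpa only [rpow_rpow] using ((hcont _).intervalIntegrable 0 1).1.integrable)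
    (by simpa only [rpow_rpow, norm_eq_abs] using
      (hint.continuousOn_mul (hcont _).continuousOn).1.integrable)
  simp only [rpow_rpow, norm_eq_abs, ← intervalIntegral.integral_of_le zero_le_one,
    ← mul_div_assoc] at holder
  rw [integral_geomPath_rpow ha hb hab hexp] at holder
  refine (intervalIntegral.abs_integral_le_integral_abs zero_le_one).trans ?_
  simpa only [abs_mul, abs_of_pos (rpow_pos_of_pos (geomPath_pos ha hb _) _)] using holder

namespace GAConvexOn

variable {α m c a b : ℝ} {h : ℝ → ℝ}

lemma apply_geomPath_le (hconv : GAConvexOn α m c h) (hm : m ≠ 0) (ha : 0 ≤ a) (hb : 0 ≤ b)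
    (hac : a ^ (1 / m) ≤ c) (hbc : b ≤ c) {t : ℝ} (ht : t ∈ Icc (0 : ℝ) 1) :
    h (geomPath a b t) ≤ t ^ α * h b + m * (1 - t ^ α) * h (a ^ (1 / m)) := by
  have path_eq : b ^ t * (a ^ (1 / m)) ^ (m * (1 - t)) = geomPath a b t := by
    rw [← rpow_mul ha, ← mul_assoc, one_div_mul_cancel hm, one_mul, mul_comm, geomPath]
  simpa only [path_eq] using hconv b ⟨hb, hbc⟩ (a ^ (1 / m)) ⟨by positivity, hac⟩ t ht

lemma intervalIntegrable_comp_geomPath (hconv : GAConvexOn α m c h) (hα : 0 ≤ α) (hm : 0 < m)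
    (ha : 0 ≤ a) (hb : 0 ≤ b) (hac : a ^ (1 / m) ≤ c) (hbc : b ≤ c) (hh : ∀ x, 0 ≤ h x)
    (hmeas : AEStronglyMeasurable (fun t => h (geomPath a b t)) (volume.restrict (Ioc 0 1))) :
    IntervalIntegrable (fun t => h (geomPath a b t)) volume 0 1 := by
  rw [intervalIntegrable_iff_integrableOn_Ioc_of_le zero_le_one]
  refine Integrable.of_bound (C := h b + m * h (a ^ (1 / m))) hmeas ?_
  filter_upwards [ae_restrict_mem measurableSet_Ioc] with t ht
  have htα : t ^ α ≤ 1 := rpow_le_one ht.1.le ht.2 hα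
  have htα' : 1 - t ^ α ≤ 1 := sub_le_self 1 (rpow_nonneg ht.1.le α)
  calc
    ‖h (geomPath a b t)‖ = h (geomPath a b t) := norm_of_nonneg (hh _)
    _ ≤ t ^ α * h b + m * (1 - t ^ α) * h (a ^ (1 / m)) :=
      hconv.apply_geomPath_le hm.ne' ha hb hac hbc (Ioc_subset_Icc_self ht)
    _ ≤ 1 * h b + m * 1 * h (a ^ (1 / m)) := by gcongr <;> exact hh _
    _ = h b + m * h (a ^ (1 / m)) := by rw [one_mul, mul_one]

lemma integral_geomPath_rpow_mul_comp_le (hconv : GAConvexOn α m c h) (hα : 0 ≤ α) (hm : m ≠ 0)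
    (ha : 0 < a) (hb : 0 < b) (hab : a ≠ b) (hac : a ^ (1 / m) ≤ c) (hbc : b ≤ c)
    (hint : IntervalIntegrable (fun t => h (geomPath a b t)) volume 0 1) {s : ℝ} (hs : s ≠ 0) :
    ∫ t in (0 : ℝ)..1, geomPath a b t ^ s * h (geomPath a b t) ≤
      m * (L (a ^ s) (b ^ s) - G a b α s) * h (a ^ (1 / m)) + G a b α s * h b := by
  set A := h (a ^ (1 / m))
  have hg := continuous_geomPath_rpow ha hb s
  have : Continuous fun t : ℝ => t ^ α := continuous_rpow_const hα
  calc
    ∫ t in (0 : ℝ)..1, geomPath a b t ^ s * h (geomPath a b t)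
    _ ≤ ∫ t in (0 : ℝ)..1, geomPath a b t ^ s * (t ^ α * h b + m * (1 - t ^ α) * A) :=
      intervalIntegral.integral_mono_on zero_le_one (hint.continuousOn_mul hg.continuousOn)
        (Continuous.intervalIntegrable (by fun_prop) 0 1) fun t ht =>
          mul_le_mul_of_nonneg_left (hconv.apply_geomPath_le hm ha.le hb.le hac hbc ht)
            (rpow_nonneg (geomPath_pos ha hb t).le s)
    _ = ∫ t in (0 : ℝ)..1, (m * A * (geomPath a b t ^ s - t ^ α * geomPath a b t ^ s) +
          h b * (t ^ α * geomPath a b t ^ s)) := by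
      congr 1; ext t; ring
    _ = m * A * (L (a ^ s) (b ^ s) - G a b α s) + h b * G a b α s := by
      rw [intervalIntegral.integral_add, intervalIntegral.integral_const_mul,
        intervalIntegral.integral_const_mul, intervalIntegral.integral_sub,
        integral_geomPath_rpow ha hb hab hs, integral_rpow_mul_geomPath_rpow ha.le hb.le]
      all_goals exact Continuous.intervalIntegrable (by fun_prop) 0 1
    _ = m * (L (a ^ s) (b ^ s) - G a b α s) * A + G a b α s * h b := by ring

end GAConvexOn

theorem stmt_10_general {f f' : ℝ → ℝ} {a b α m p q : ℝ} (ha : 0 < a) (hab : a < b)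
    (hα : 0 ≤ α) (hm : 0 < m) (hq : 1 < q) (hp : p ≠ 0) (hpq : p ≠ q)
    (hderiv : ∀ x ∈ Icc a b, HasDerivAt f (f' x) x)
    (hconv : GAConvexOn α m (max (a ^ (1 / m)) b) (fun x => |f' x| ^ q)) :
    |(b ^ 2 * f b - a ^ 2 * f a) / 2 - ∫ x in a..b, x * f x| ≤
      ((log b - log a) / 2) *
        L (a ^ (3 * (q - p) / (q - 1))) (b ^ (3 * (q - p) / (q - 1))) ^ (1 - 1 / q) *
        (m * (L (a ^ (3 * p)) (b ^ (3 * p)) - G a b α (3 * p)) * |f' (a ^ (1 / m))| ^ q +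
          G a b α (3 * p) * |f' b| ^ q) ^ (1 / q) := by
  have hb : 0 < b := ha.trans hab
  have hlog : 0 ≤ (log b - log a) / 2 := by linarith [log_le_log ha hab.le]
  have hmeas : AEStronglyMeasurable (fun t => f' (geomPath a b t)) (volume.restrict (Ioc 0 1)) :=
    aestronglyMeasurable_comp_of_hasDerivAt (continuous_geomPath ha hb).measurable <|
      (ae_restrict_mem measurableSet_Ioc).mono fun t ht =>
        hderiv _ (geomPath_mem_Icc ha hab.le (Ioc_subset_Icc_self ht))
  have hint_rpow : IntervalIntegrable (fun t => |f' (geomPath a b t)| ^ q) volume 0 1 :=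
    hconv.intervalIntegrable_comp_geomPath hα hm ha.le hb.le (le_max_left _ _) (le_max_right _ _)
      (fun x => by positivity) (hmeas.norm.aemeasurable.pow_const q).aestronglyMeasurable
  have hint : IntervalIntegrable (fun t => f' (geomPath a b t)) volume 0 1 := by
    rw [intervalIntegrable_iff_integrableOn_Ioc_of_le zero_le_one] at hint_rpow ⊢
    exact integrable_of_integrable_norm_rpow hq.le hmeas hint_rpow
  have identity : (b ^ 2 * f b - a ^ 2 * f a) / 2 - ∫ x in a..b, x * f x =
      (log b - log a) / 2 *
        ∫ t in (0 : ℝ)..1, geomPath a b t ^ (3 : ℝ) * f' (geomPath a b t) := by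
    have h := log_sub_log_mul_integral_geomPath_pow_mul_deriv ha hab.le hderiv hint 1
    simp only [Nat.reduceAdd, Nat.cast_one, pow_one] at h
    simp only [rpow_ofNat]
    linarith
  have holder := abs_integral_geomPath_rpow_mul_le ha hb hab.ne hq hpq three_ne_zero hmeas
    hint_rpow
  have convexity := hconv.integral_geomPath_rpow_mul_comp_le hα hm.ne' ha hb hab.ne
    (le_max_left _ _) (le_max_right _ _) hint_rpow (mul_ne_zero three_ne_zero hp)
  have hL : 0 ≤ L (a ^ (3 * (q - p) / (q - 1))) (b ^ (3 * (q - p) / (q - 1))) :=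
    L_nonneg (by positivity) (by positivity)
  have hpos : 0 ≤ ∫ t in (0 : ℝ)..1, geomPath a b t ^ (3 * p) * |f' (geomPath a b t)| ^ q :=
    intervalIntegral.integral_nonneg zero_le_one fun t _ =>
      mul_nonneg (rpow_nonneg (geomPath_pos ha hb t).le _) (by positivity)
  rw [identity, abs_mul, abs_of_nonneg hlog, mul_assoc]
  refine mul_le_mul_of_nonneg_left (holder.trans ?_) hlog
  gcongr

theorem stmt_10 (f f' : ℝ → ℝ) (a b α m p q : ℝ) (ha : 0 < a) (hab : a < b)
    (hα : α ∈ Ioc (0:ℝ) 1) (hm : m ∈ Ioc (0:ℝ) 1) (hq : 1 < q) (hp : 0 < p) (hpq : p < q)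
    (hderiv : ∀ x ∈ Ici (0:ℝ), HasDerivAt f (f' x) x)
    (hint : IntervalIntegrable f' volume a b)
    (hconv : GAConvexOn α m (max (a ^ (1/m)) b) (fun x => |f' x| ^ q)) :
    |(b ^ 2 * f b - a ^ 2 * f a) / 2 - ∫ x in a..b, x * f x| ≤
      ((Real.log b - Real.log a) / 2) *
        L (a ^ (3 * (q - p) / (q - 1))) (b ^ (3 * (q - p) / (q - 1))) ^ (1 - 1/q) *
        (m * (L (a ^ (3 * p)) (b ^ (3 * p)) - G a b α (3 * p)) * |f' (a ^ (1/m))| ^ q +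
          G a b α (3 * p) * |f' b| ^ q) ^ (1/q) :=
  stmt_10_general ha hab hα.1.le hm.1 hq hp.ne' hpq.ne
    (fun x hx => hderiv x (ha.le.trans hx.1)) hconv
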